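/- arXiv:1604.08707 — 3 statements merged into one kernel-verified Lean document; each statement's English description precedes it below -/
import Mathlib

section
/- Let r0, r1, i0, i1 be nonnegative reals with r1 ≤ r0, r0² + r1² = 1, and i0² + i1² = 1. Then there exist reals P₁, P₂ with P₁ ≥ 0, P₂ ≥ 0, P₁ + P₂ = 1, i0²P₁ + i1²P₂ = r0², and i0²P₂ + i1²P₁ = r1² if and only if r0 ≤ max{i0, i1}. -/
/-! Put `(x, y) = (i0², i1²)` and `(u, v) = (r0², r1²)`. Averaging `(x, y)` with its swap `(y, x)`
preserves the sum of the coordinates. Since `x + y = u + v`, only the first coordinate has to be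
matched, so `(u, v)` is such an average exactly when `u` lies between `x` and `y`. The lower bound
is automatic because `u` is the larger of `u` and `v`, leaving `u ≤ max x y`. -/

open Set

section Segment

variable {𝕜 E : Type*} [Semiring 𝕜]

theorem smul_add_smul_add_swap [AddCommMonoid E] [Module 𝕜 E] {p q : 𝕜} (hpq : p + q = 1)
    (x y : E) : (p • x + q • y) + (q • x + p • y) = x + y := by
  rw [add_add_add_comm, ← add_smul, ← add_smul, add_comm q p, hpq, one_smul, one_smul]

theorem mem_segment_iff_exists_swap_of_add_eq_add [PartialOrder 𝕜]
    [AddCancelCommMonoid E] [Module 𝕜 E] {x y u v : E} (hsum : x + y = u + v) :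
    u ∈ segment 𝕜 x y ↔
      ∃ p q : 𝕜, 0 ≤ p ∧ 0 ≤ q ∧ p + q = 1 ∧ p • x + q • y = u ∧ q • x + p • y = v := by
  constructor
  · rintro ⟨p, q, hp, hq, hpq, rfl⟩
    exact ⟨p, q, hp, hq, hpq, rfl, add_left_cancel ((smul_add_smul_add_swap hpq x y).trans hsum)⟩
  · rintro ⟨p, q, hp, hq, hpq, hu, -⟩
    exact ⟨p, q, hp, hq, hpq, hu⟩

end Segment

theorem mem_uIcc_iff_le_max_of_add_eq_add {α : Type*} [AddCommMonoid α] [LinearOrder α]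
    [IsOrderedCancelAddMonoid α] {x y u v : α} (hsum : x + y = u + v) (hvu : v ≤ u) :
    u ∈ uIcc x y ↔ u ≤ max x y := by
  have hmin : min x y ≤ u := max_eq_left hvu ▸ min_le_max_of_add_le_add hsum.le
  exact and_iff_right hmin

theorem stmt_1_general {𝕜 : Type*} [Field 𝕜] [LinearOrder 𝕜] [IsStrictOrderedRing 𝕜]
    {x y u v : 𝕜} (hsum : x + y = u + v) (hvu : v ≤ u) :
    (∃ p q : 𝕜, 0 ≤ p ∧ 0 ≤ q ∧ p + q = 1 ∧ x * p + y * q = u ∧ x * q + y * p = v) ↔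
      u ≤ max x y := by
  rw [← mem_uIcc_iff_le_max_of_add_eq_add hsum hvu, ← segment_eq_uIcc,
    mem_segment_iff_exists_swap_of_add_eq_add hsum]
  simp only [smul_eq_mul, mul_comm]

theorem stmt_1 (r0 r1 i0 i1 : ℝ)
    (hr0 : 0 ≤ r0) (hr1 : 0 ≤ r1) (hi0 : 0 ≤ i0) (hi1 : 0 ≤ i1)
    (hr10 : r1 ≤ r0) (hrnorm : r0 ^ 2 + r1 ^ 2 = 1) (hinorm : i0 ^ 2 + i1 ^ 2 = 1) :
    (∃ P1 P2 : ℝ, 0 ≤ P1 ∧ 0 ≤ P2 ∧ P1 + P2 = 1 ∧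
      i0 ^ 2 * P1 + i1 ^ 2 * P2 = r0 ^ 2 ∧ i0 ^ 2 * P2 + i1 ^ 2 * P1 = r1 ^ 2)
    ↔ r0 ≤ max i0 i1 := by
  rw [stmt_1_general (hinorm.trans hrnorm.symm) (pow_le_pow_left₀ hr1 hr10 2)]
  simp only [le_max_iff, sq_le_sq₀ hr0 hi0, sq_le_sq₀ hr0 hi1]
end

section
/- Let θ, φ ∈ ℝ, let |i⟩ = (cos(θ/2), e^{iφ} sin(θ/2)) ∈ ℂ², and let P₁, P₂ be reals. Set i0 = cos(θ/2), i1 = sin(θ/2), U₀ = I, U₁ = σ₃, U₂ = σ₁, U₃ = −σ₃σ₁, and p₀ = p₁ = P₁/2, p₂ = p₃ = P₂/2. Then Σ_{m=0}^{3} p_m · U_m† |i⟩⟨i| U_m = (i0²P₁ + i1²P₂)|0⟩⟨0| + (i1²P₁ + i0²P₂)|1⟩⟨1|; in particular the result is a diagonal matrix. -/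
/-!
Conjugation by `σ₃` negates the off-diagonal entries, so the equal mixture of `ρ` and `σ₃ ρ σ₃` is
the diagonal part of `ρ`. The remaining two terms are the first two conjugated by `σ₁`, up to a sign
that cancels, and conjugation by `σ₁` swaps the basis vectors. For `ρ = |i⟩⟨i|` the diagonal entries
are the squared moduli of the amplitudes, in which the phase `φ` disappears.
-/

open Matrix Complex

noncomputable def σ₁ : Matrix (Fin 2) (Fin 2) ℂ := !![0, 1; 1, 0]
noncomputable def σ₃ : Matrix (Fin 2) (Fin 2) ℂ := !![1, 0; 0, -1]

/-- The outer product |ψ⟩⟨ψ| of a vector with itself. -/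
noncomputable def outer {n : Type*} (ψ : n → ℂ) : Matrix n n ℂ :=
  Matrix.vecMulVec ψ (star ψ)

theorem σ₁_eq_permMatrix : σ₁ = (Equiv.swap 0 1).permMatrix ℂ := by
  ext a b
  fin_cases a <;> fin_cases b <;> simp [σ₁]

theorem σ₃_eq_diagonal : σ₃ = diagonal ![1, -1] := by
  ext a b
  fin_cases a <;> fin_cases b <;> simp [σ₃]

theorem conjTranspose_σ₁ : σ₁ᴴ = σ₁ := by
  rw [σ₁_eq_permMatrix, conjTranspose_permMatrix, Equiv.swap_inv]

theorem conjTranspose_σ₃ : σ₃ᴴ = σ₃ := by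
  simp [σ₃_eq_diagonal, diagonal_conjTranspose]

theorem add_σ₃_mul_mul_σ₃ (ρ : Matrix (Fin 2) (Fin 2) ℂ) :
    ρ + σ₃ * ρ * σ₃ = (2 : ℂ) • diagonal ρ.diag := by
  ext a b
  fin_cases a <;> fin_cases b <;> simp [σ₃_eq_diagonal, two_mul]

theorem σ₁_mul_mul_σ₁ (ρ : Matrix (Fin 2) (Fin 2) ℂ) :
    σ₁ * ρ * σ₁ = ρ.submatrix (Equiv.swap 0 1) (Equiv.swap 0 1) := by
  rw [σ₁_eq_permMatrix, PEquiv.toMatrix_toPEquiv_mul, PEquiv.mul_toMatrix_toPEquiv,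
    submatrix_submatrix, Equiv.symm_swap, Function.comp_id, Function.id_comp]

theorem σ₁_mul_diagonal_mul_σ₁ (d : Fin 2 → ℂ) :
    σ₁ * diagonal d * σ₁ = diagonal (d ∘ Equiv.swap 0 1) := by
  rw [σ₁_mul_mul_σ₁, submatrix_diagonal_equiv]

theorem outer_apply_self {n : Type*} (ψ : n → ℂ) (i : n) :
    outer ψ i i = (‖ψ i‖ : ℂ) ^ 2 :=
  mul_conj' (ψ i)

theorem outer_ofReal_apply_zero (r : ℝ) (z : ℂ) :
    outer ![(r : ℂ), z] 0 0 = (r ^ 2 : ℝ) := by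
  simp [outer_apply_self, ← ofReal_pow]

theorem outer_phase_mul_ofReal_apply_one (z : ℂ) (φ r : ℝ) :
    outer ![z, exp (I * φ) * r] 1 1 = (r ^ 2 : ℝ) := by
  simp [outer_apply_self, norm_exp_I_mul_ofReal, ← ofReal_pow]

theorem outer_single_one {n : Type*} [DecidableEq n] (i : n) :
    outer (Pi.single i 1) = single i i 1 := by
  rw [outer, ← Pi.single_star, star_one, ← single_eq_single_vecMulVec_single]

theorem diagonal_eq_sum_smul_outer_single {n : Type*} [Fintype n] [DecidableEq n] (d : n → ℂ) :
    diagonal d = ∑ i, d i • outer (Pi.single i 1) := by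
  simp only [outer_single_one, smul_single, smul_eq_mul, mul_one, sum_single_eq_diagonal]

theorem diagonal_eq_smul_outer_add_smul_outer (d : Fin 2 → ℂ) :
    diagonal d = d 0 • outer ![1, 0] + d 1 • outer ![0, 1] := by
  have single_zero : (Pi.single 0 1 : Fin 2 → ℂ) = ![1, 0] := by
    ext a; fin_cases a <;> rfl
  have single_one : (Pi.single 1 1 : Fin 2 → ℂ) = ![0, 1] := by
    ext a; fin_cases a <;> rfl
  rw [diagonal_eq_sum_smul_outer_single, Fin.sum_univ_two, single_zero, single_one]

theorem stmt_6_general (ρ : Matrix (Fin 2) (Fin 2) ℂ) (P1 P2 : ℂ) :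
    let U : Fin 4 → Matrix (Fin 2) (Fin 2) ℂ := ![1, σ₃, σ₁, -(σ₃ * σ₁)]
    let p : Fin 4 → ℂ := ![P1 / 2, P1 / 2, P2 / 2, P2 / 2]
    ∑ m : Fin 4, p m • ((U m)ᴴ * ρ * U m) =
      (ρ 0 0 * P1 + ρ 1 1 * P2) • outer ![1, 0] +
        (ρ 1 1 * P1 + ρ 0 0 * P2) • outer ![0, 1] := by
  intro U p
  calc
    ∑ m : Fin 4, p m • ((U m)ᴴ * ρ * U m)
      = (P1 / 2) • (ρ + σ₃ * ρ * σ₃) + (P2 / 2) • (σ₁ * (ρ + σ₃ * ρ * σ₃) * σ₁) := by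
        simp [U, p, Fin.sum_univ_four, conjTranspose_σ₁, conjTranspose_σ₃, mul_add, add_mul,
          mul_assoc, add_assoc]
    _ = P1 • diagonal ρ.diag + P2 • diagonal (ρ.diag ∘ Equiv.swap 0 1) := by
        rw [add_σ₃_mul_mul_σ₃, Matrix.mul_smul, Matrix.smul_mul, σ₁_mul_diagonal_mul_σ₁,
          smul_smul, smul_smul, div_mul_cancel₀ P1 two_ne_zero, div_mul_cancel₀ P2 two_ne_zero]
    _ = (ρ 0 0 * P1 + ρ 1 1 * P2) • outer ![1, 0] +
          (ρ 1 1 * P1 + ρ 0 0 * P2) • outer ![0, 1] := by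
        simp only [diagonal_eq_smul_outer_add_smul_outer, Function.comp_apply, diag_apply,
          Equiv.swap_apply_left, Equiv.swap_apply_right]
        module

theorem stmt_6 (θ φ P1 P2 : ℝ) :
    let iket : Fin 2 → ℂ :=
      ![(Real.cos (θ / 2) : ℂ), Complex.exp (Complex.I * (φ : ℂ)) * (Real.sin (θ / 2) : ℂ)]
    let U : Fin 4 → Matrix (Fin 2) (Fin 2) ℂ := ![1, σ₃, σ₁, -(σ₃ * σ₁)]
    let p : Fin 4 → ℝ := ![P1 / 2, P1 / 2, P2 / 2, P2 / 2]
    ∑ m : Fin 4, (p m : ℂ) • ((U m)ᴴ * outer iket * U m) =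
      ((Real.cos (θ / 2) ^ 2 * P1 + Real.sin (θ / 2) ^ 2 * P2 : ℝ) : ℂ) •
          outer (![1, 0] : Fin 2 → ℂ) +
        ((Real.sin (θ / 2) ^ 2 * P1 + Real.cos (θ / 2) ^ 2 * P2 : ℝ) : ℂ) •
          outer (![0, 1] : Fin 2 → ℂ) := by
  intro iket U p
  simpa only [iket, U, p, outer_ofReal_apply_zero, outer_phase_mul_ofReal_apply_one,
    Fin.sum_univ_four, cons_val, ofReal_add, ofReal_mul, ofReal_div, ofReal_ofNat] using
    stmt_6_general (outer iket) P1 P2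
end

section
/- Let K be a real number with K ≥ 2. Then there exists a unique N ∈ [1/2, ∞) satisfying N = (K/2)·sin(π/(4N)). -/
open Real

/-!
On `[1/2, ∞)` the angle `π / (4 * N)` decreases from `π / 2`, where sine is increasing, so the
right-hand side `f` of the equation is continuous and decreasing, with `f (1 / 2) = K / 2`. Hence
`f` has at most one fixed point, and it has one as soon as `1 / 2 ≤ f (1 / 2)`, that is, `1 ≤ K`.
-/

open Set Function

theorem eq_of_isFixedPt_of_antitoneOn {α : Type*} [LinearOrder α] {s : Set α} {f : α → α}
    (hf : AntitoneOn f s) {x y : α} (hx : x ∈ s) (hy : y ∈ s)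
    (hfx : IsFixedPt f x) (hfy : IsFixedPt f y) : x = y := by
  wlog hxy : x ≤ y generalizing x y
  · exact (this hy hx hfy hfx (le_of_not_ge hxy)).symm
  · have hyx : f y ≤ f x := hf hx hy hxy
    rw [hfx.eq, hfy.eq] at hyx
    exact le_antisymm hxy hyx

theorem existsUnique_isFixedPt_of_antitoneOn_Ici {α : Type*} [ConditionallyCompleteLinearOrder α]
    [TopologicalSpace α] [OrderTopology α] [DenselyOrdered α] {f : α → α} {a : α}
    (hanti : AntitoneOn f (Ici a)) (hcont : ContinuousOn f (Ici a)) (ha : a ≤ f a) :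
    ∃! x, x ∈ Ici a ∧ IsFixedPt f x := by
  have hffa : f (f a) ≤ f a := hanti self_mem_Ici ha ha
  obtain ⟨x, hx, hfx⟩ := exists_mem_Icc_isFixedPt (hcont.mono Icc_subset_Ici_self) ha ha hffa
  exact ⟨x, ⟨hx.1, hfx⟩, fun y hy ↦ eq_of_isFixedPt_of_antitoneOn hanti hy.1 hx.1 hy.2 hfx⟩

theorem antitoneOn_sin_pi_div_four_mul :
    AntitoneOn (fun x : ℝ ↦ sin (π / (4 * x))) (Ici (1 / 2)) := by
  intro x (hx : 1 / 2 ≤ x) y (hy : 1 / 2 ≤ y) hxy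
  have hpos : 0 < π / (4 * y) := by positivity
  have hle : π / (4 * y) ≤ π / (4 * x) := by gcongr
  have hright : π / (4 * x) ≤ π / 2 := by gcongr; linarith
  exact sin_le_sin_of_le_of_le_pi_div_two (by linarith [pi_pos]) hright hle

theorem continuousOn_sin_pi_div_four_mul :
    ContinuousOn (fun x : ℝ ↦ sin (π / (4 * x))) {0}ᶜ := by
  refine continuous_sin.comp_continuousOn (continuousOn_const.div (by fun_prop) ?_)
  exact fun x hx ↦ mul_ne_zero four_ne_zero hx

theorem stmt_16_general (K : ℝ) (hK : 1 ≤ K) :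
    ∃! N : ℝ, N ∈ Ici (1 / 2 : ℝ) ∧ N = K / 2 * sin (π / (4 * N)) := by
  have hanti : AntitoneOn (fun N ↦ K / 2 * sin (π / (4 * N))) (Ici (1 / 2)) :=
    fun x hx y hy hxy ↦
      mul_le_mul_of_nonneg_left (antitoneOn_sin_pi_div_four_mul hx hy hxy) (by linarith)
  have hsub : Ici (1 / 2 : ℝ) ⊆ {0}ᶜ := fun x (hx : 1 / 2 ≤ x) ↦
    (one_half_pos.trans_le hx).ne'
  have hcont : ContinuousOn (fun N ↦ K / 2 * sin (π / (4 * N))) (Ici (1 / 2)) :=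
    continuousOn_const.mul (continuousOn_sin_pi_div_four_mul.mono hsub)
  have hstart : 1 / 2 ≤ K / 2 * sin (π / (4 * (1 / 2))) := by
    have hangle : π / (4 * (1 / 2)) = π / 2 := by norm_num
    rw [hangle, sin_pi_div_two]
    linarith
  simpa only [IsFixedPt, eq_comm] using
    existsUnique_isFixedPt_of_antitoneOn_Ici hanti hcont hstart

theorem stmt_16 (K : ℝ) (hK : 2 ≤ K) :
    ∃! N : ℝ, N ∈ Set.Ici (1 / 2 : ℝ) ∧ N = K / 2 * Real.sin (π / (4 * N)) :=
  stmt_16_general K (by linarith)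
end
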